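/- arXiv:0708.1969 — 6 statements merged into one kernel-verified Lean document; each statement's English description precedes it below -/
import Mathlib

section
/- Let n be a natural number, a : Fin n → ℤ, and for nonzero λ ∈ ℂ let D_a(λ) denote the diagonal matrix with diagonal entries λ^{a i} (integer powers). For any g ∈ GL_n(ℂ), the function λ ↦ D_a(λ) · g · D_a(λ)⁻¹ (as an n×n complex matrix) tends to the identity matrix along the punctured neighborhood filter 𝓝[≠] 0 on ℂ if and only if for all indices i, j with a i ≤ a j, the (i,j) entry of g equals the (i,j) entry of the identity matrix (i.e. g_{ij} = 1 if i = j and g_{ij} = 0 if i ≠ j). -/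
open Filter Matrix

/-!
The `(i, j)` entry of the conjugate is `lam ^ (a i - a j) * g i j`. For a positive exponent it
tends to `0` whatever `g i j` is; for exponent zero it is constant; for a negative exponent it can
only converge if `g i j = 0`.
-/

section

open scoped Topology

theorem diagonal_mul_mul_diagonal_inv_apply {ι K : Type*} [Fintype ι] [DecidableEq ι] [Field K]
    {v : ι → K} (hv : ∀ i, v i ≠ 0) (M : Matrix ι ι K) (i j : ι) :
    (diagonal v * M * (diagonal v)⁻¹) i j = v i / v j * M i j := by
  have inv_diagonal_eq : (diagonal v)⁻¹ = diagonal v⁻¹ :=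
    inv_eq_right_inv <| by simp [diagonal_mul_diagonal, hv]
  rw [inv_diagonal_eq, mul_diagonal, diagonal_mul, Pi.inv_apply]
  ring

variable {K : Type*} [Field K] [TopologicalSpace K] [ContinuousMul K]

theorem tendsto_zpow_nhdsNE_zero {m : ℤ} (hm : 0 < m) :
    Tendsto (fun x : K => x ^ m) (𝓝[≠] 0) (𝓝 0) := by
  lift m to ℕ using hm.le
  have hm' : m ≠ 0 := by lia
  simpa [hm'] using ((continuous_pow (M := K) m).tendsto 0).mono_left nhdsWithin_le_nhds

theorem tendsto_zpow_mul_const_nhdsNE_zero {m : ℤ} (hm : 0 < m) (c : K) :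
    Tendsto (fun x : K => x ^ m * c) (𝓝[≠] 0) (𝓝 0) := by
  simpa using (tendsto_zpow_nhdsNE_zero hm).mul_const c

variable [T2Space K] [(𝓝[≠] (0 : K)).NeBot]

theorem eq_zero_of_tendsto_zpow_mul_const_nhdsNE_zero {m : ℤ} (hm : m < 0) {c d : K}
    (h : Tendsto (fun x : K => x ^ m * c) (𝓝[≠] 0) (𝓝 d)) : c = 0 := by
  have tendsto_cancel : Tendsto (fun x : K => x ^ (-m) * (x ^ m * c)) (𝓝[≠] 0) (𝓝 0) := by
    simpa using (tendsto_zpow_nhdsNE_zero (neg_pos.2 hm)).mul h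
  have cancel_eq : (fun x : K => x ^ (-m) * (x ^ m * c)) =ᶠ[𝓝[≠] 0] fun _ => c := by
    filter_upwards [self_mem_nhdsWithin] with x hx
    rw [_root_.zpow_neg, inv_mul_cancel_left₀ (zpow_ne_zero m hx)]
  exact tendsto_const_nhds_iff.1 (tendsto_cancel.congr' cancel_eq)

theorem tendsto_zpow_mul_const_nhdsNE_zero_iff {m : ℤ} {c d : K} (hd : m ≠ 0 → d = 0) :
    Tendsto (fun x : K => x ^ m * c) (𝓝[≠] 0) (𝓝 d) ↔ (m ≤ 0 → c = d) := by
  rcases lt_trichotomy m 0 with hm | rfl | hm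
  · obtain rfl := hd hm.ne
    refine ⟨fun h _ => eq_zero_of_tendsto_zpow_mul_const_nhdsNE_zero hm h, fun h => ?_⟩
    simp [h hm.le]
  · simp [tendsto_const_nhds_iff]
  · obtain rfl := hd hm.ne'
    simp [hm.not_ge, tendsto_zpow_mul_const_nhdsNE_zero hm c]

theorem tendsto_conj_diagonal_nhdsWithin_zero_iff_general {ι : Type*} [Fintype ι] [DecidableEq ι]
    (a : ι → ℤ) (M : Matrix ι ι K) :
    Tendsto (fun x : K => diagonal (fun i => x ^ a i) * M * (diagonal (fun i => x ^ a i))⁻¹)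
      (𝓝[≠] 0) (𝓝 1) ↔
    ∀ i j, a i ≤ a j → M i j = (1 : Matrix ι ι K) i j := by
  have conj_eq : (fun x : K => diagonal (fun i => x ^ a i) * M * (diagonal (fun i => x ^ a i))⁻¹)
      =ᶠ[𝓝[≠] 0] fun x => Matrix.of fun i j => x ^ (a i - a j) * M i j := by
    filter_upwards [self_mem_nhdsWithin] with x hx
    ext i j
    rw [diagonal_mul_mul_diagonal_inv_apply (fun i => zpow_ne_zero (a i) hx), of_apply,
      zpow_sub₀ hx]
  have one_apply_eq_zero (i j : ι) (hij : a i - a j ≠ 0) : (1 : Matrix ι ι K) i j = 0 :=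
    one_apply_ne fun h => hij (by rw [h, sub_self])
  rw [tendsto_congr' conj_eq]
  refine tendsto_pi_nhds.trans <| forall_congr' fun i =>
    tendsto_pi_nhds.trans <| forall_congr' fun j => ?_
  simpa only [of_apply, sub_nonpos] using
    tendsto_zpow_mul_const_nhdsNE_zero_iff (one_apply_eq_zero i j)

end

/-- For the one-parameter subgroup `λ ↦ diag(λ^(a i))` of `GL_n(ℂ)`, the conjugate
`D_a(λ) g D_a(λ)⁻¹` tends to the identity matrix as `λ → 0` (along the punctured
neighborhood filter) if and only if `g` agrees with the identity matrix in every
entry `(i,j)` with `a i ≤ a j`. -/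
theorem tendsto_conj_diagonal_nhdsWithin_zero_iff (n : ℕ) (a : Fin n → ℤ)
    (g : GL (Fin n) ℂ) :
    Filter.Tendsto
      (fun lam : ℂ =>
        Matrix.diagonal (fun i => lam ^ (a i)) * (g : Matrix (Fin n) (Fin n) ℂ) *
          (Matrix.diagonal (fun i => lam ^ (a i)))⁻¹)
      (nhdsWithin (0 : ℂ) {0}ᶜ) (nhds (1 : Matrix (Fin n) (Fin n) ℂ)) ↔
    ∀ i j : Fin n, a i ≤ a j →
      (g : Matrix (Fin n) (Fin n) ℂ) i j = (1 : Matrix (Fin n) (Fin n) ℂ) i j :=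
  tendsto_conj_diagonal_nhdsWithin_zero_iff_general a (g : Matrix (Fin n) (Fin n) ℂ)
end

section
/- Let n be a natural number, a : Fin n → ℤ, and for nonzero λ ∈ ℂ let D_a(λ) denote the diagonal matrix with diagonal entries λ^{a i} (integer powers). For any g ∈ GL_n(ℂ), the function λ ↦ D_a(λ) · g · D_a(λ)⁻¹ (as an n×n complex matrix) tends to the identity matrix along the cobounded filter on ℂ (i.e. as λ → ∞) if and only if for all indices i, j with a j ≤ a i, the (i,j) entry of g equals the (i,j) entry of the identity matrix. -/
open Filter Matrix

/-!
For `λ ≠ 0` the `(i, j)` entry of the conjugate is `λ ^ (a i - a j) * g i j`, and matrices converge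
entrywise. As `λ → ∞`, the entry tends to `0` whatever `g i j` is when `a i < a j`, is constant when
`a i = a j`, and converges only if `g i j = 0` when `a j < a i`: multiplying a convergent entry by
`λ ^ (a j - a i) → 0` leaves the constant `g i j`.
-/

open Bornology (cobounded eventually_ne_cobounded)

section ZPow

variable {𝕜 : Type*} [NormedDivisionRing 𝕜] {k : ℤ}

lemma tendsto_zpow_cobounded_nhds_zero (hk : k < 0) :
    Tendsto (fun z : 𝕜 => z ^ k) (cobounded 𝕜) (nhds 0) := by
  obtain ⟨m, rfl⟩ : ∃ m : ℕ, k = -(m : ℤ) := ⟨k.natAbs, by lia⟩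
  have hm : m ≠ 0 := by lia
  simpa [hm] using (tendsto_inv₀_cobounded (α := 𝕜)).pow m

variable [NeBot (cobounded 𝕜)] {c d : 𝕜}

lemma tendsto_zpow_mul_const_cobounded_nhds_iff_of_neg (hk : k < 0) :
    Tendsto (fun z : 𝕜 => z ^ k * c) (cobounded 𝕜) (nhds d) ↔ d = 0 := by
  have tendsto_zero : Tendsto (fun z : 𝕜 => z ^ k * c) (cobounded 𝕜) (nhds 0) := by
    simpa only [zero_mul] using (tendsto_zpow_cobounded_nhds_zero hk).mul_const c
  exact ⟨fun h => tendsto_nhds_unique h tendsto_zero, fun hd => hd ▸ tendsto_zero⟩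

lemma tendsto_zpow_mul_const_cobounded_nhds_iff_of_pos (hk : 0 < k) :
    Tendsto (fun z : 𝕜 => z ^ k * c) (cobounded 𝕜) (nhds d) ↔ c = 0 ∧ d = 0 := by
  refine ⟨fun h => ?_, fun ⟨hc, hd⟩ => by simp [hc, hd]⟩
  have cancel : ∀ᶠ z : 𝕜 in cobounded 𝕜, z ^ (-k) * (z ^ k * c) = c := by
    filter_upwards [eventually_ne_cobounded 0] with z hz
    rw [_root_.zpow_neg, inv_mul_cancel_left₀ (zpow_ne_zero k hz)]
  have const_tendsto_zero : Tendsto (fun _ : 𝕜 => c) (cobounded 𝕜) (nhds 0) := by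
    simpa only [zero_mul] using
      ((tendsto_zpow_cobounded_nhds_zero (neg_lt_zero.mpr hk)).mul h).congr' cancel
  obtain rfl : c = 0 := tendsto_const_nhds_iff.mp const_tendsto_zero
  exact ⟨rfl, by simpa [tendsto_const_nhds_iff, eq_comm] using h⟩

end ZPow

section Conjugation

variable {ι K : Type*} [Fintype ι] [DecidableEq ι] [Field K]

lemma inv_diagonal_of_forall_ne_zero {d : ι → K} (hd : ∀ i, d i ≠ 0) :
    (diagonal d)⁻¹ = diagonal d⁻¹ := by
  refine inv_eq_right_inv ?_
  simp [diagonal_mul_diagonal, hd]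

lemma conj_diagonal_zpow_apply (a : ι → ℤ) (M : Matrix ι ι K) {z : K} (hz : z ≠ 0) (i j : ι) :
    (diagonal (fun i => z ^ a i) * M * (diagonal (fun i => z ^ a i))⁻¹) i j =
      z ^ (a i - a j) * M i j := by
  rw [inv_diagonal_of_forall_ne_zero fun i => zpow_ne_zero (a i) hz, mul_diagonal, diagonal_mul,
    Pi.inv_apply, zpow_sub₀ hz]
  ring

end Conjugation

theorem tendsto_conj_diagonal_cobounded_iff_general {ι 𝕜 : Type*} [Fintype ι] [DecidableEq ι]
    [NontriviallyNormedField 𝕜] (a : ι → ℤ) (M : Matrix ι ι 𝕜) :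
    Tendsto (fun z : 𝕜 => diagonal (fun i => z ^ a i) * M * (diagonal (fun i => z ^ a i))⁻¹)
      (cobounded 𝕜) (nhds 1) ↔
    ∀ i j, a j ≤ a i → M i j = (1 : Matrix ι ι 𝕜) i j := by
  refine tendsto_pi_nhds.trans (forall_congr' fun i => tendsto_pi_nhds.trans <|
    forall_congr' fun j => ?_)
  rw [tendsto_congr' ((eventually_ne_cobounded 0).mono fun z hz =>
    conj_diagonal_zpow_apply a M hz i j)]
  rcases lt_trichotomy (a i) (a j) with hlt | heq | hgt
  · have hij : i ≠ j := ne_of_apply_ne a hlt.ne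
    simp [tendsto_zpow_mul_const_cobounded_nhds_iff_of_neg (sub_neg.mpr hlt), hij, hlt.not_ge]
  · simp [heq, tendsto_const_nhds_iff]
  · have hij : i ≠ j := ne_of_apply_ne a hgt.ne'
    simp [tendsto_zpow_mul_const_cobounded_nhds_iff_of_pos (sub_pos.mpr hgt), hij, hgt.le]

/-- For the one-parameter subgroup `λ ↦ diag(λ^(a i))` of `GL_n(ℂ)`, the conjugate
`D_a(λ) g D_a(λ)⁻¹` tends to the identity matrix as `λ → ∞` (along the cobounded
filter on `ℂ`) if and only if `g` agrees with the identity matrix in every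
entry `(i,j)` with `a j ≤ a i`. -/
theorem tendsto_conj_diagonal_cobounded_iff (n : ℕ) (a : Fin n → ℤ)
    (g : GL (Fin n) ℂ) :
    Filter.Tendsto
      (fun lam : ℂ =>
        Matrix.diagonal (fun i => lam ^ (a i)) * (g : Matrix (Fin n) (Fin n) ℂ) *
          (Matrix.diagonal (fun i => lam ^ (a i)))⁻¹)
      (Bornology.cobounded ℂ) (nhds (1 : Matrix (Fin n) (Fin n) ℂ)) ↔
    ∀ i j : Fin n, a j ≤ a i →
      (g : Matrix (Fin n) (Fin n) ℂ) i j = (1 : Matrix (Fin n) (Fin n) ℂ) i j :=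
  tendsto_conj_diagonal_cobounded_iff_general a (g : Matrix (Fin n) (Fin n) ℂ)
end

section
/- Let n be a natural number, a : Fin n → ℤ, and for nonzero λ ∈ ℂ let D_a(λ) denote the diagonal matrix with diagonal entries λ^{a i}. If g ∈ GL_n(ℂ) is such that λ ↦ D_a(λ) · g · D_a(λ)⁻¹ tends to the identity matrix both along the punctured neighborhood filter 𝓝[≠] 0 on ℂ and along the cobounded filter on ℂ (λ → ∞), then g is the identity. -/
open Filter Matrix

/-!
The `(i, j)` entry of `D_a(z) g D_a(z)⁻¹` is `z ^ (a i - a j) * g i j`. If `g i j ≠ 0`, it is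
unbounded as `z → 0` when `a i < a j`, and unbounded as `z → ∞` when `a j < a i`. So as soon as
both limits exist, `g i j = 0` unless `a i = a j`. The conjugate then does not depend on `z`: it
is always `g`, and so are both limits.
-/

section

open Bornology Topology

lemma tendsto_zpow_cobounded_cobounded {𝕜 : Type*} [NormedDivisionRing 𝕜] {m : ℤ} (hm : 0 < m) :
    Tendsto (fun z : 𝕜 ↦ z ^ m) (cobounded 𝕜) (cobounded 𝕜) := by
  lift m to ℕ using hm.le
  simpa only [zpow_natCast] using tendsto_pow_cobounded_cobounded (by lia)

lemma eq_zero_of_tendsto_mul_const_of_tendsto_cobounded {α 𝕜 : Type*} [NormedDivisionRing 𝕜]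
    {l : Filter α} [l.NeBot] {f : α → 𝕜} {c d : 𝕜} (hf : Tendsto f l (cobounded 𝕜))
    (hfc : Tendsto (fun x ↦ f x * c) l (𝓝 d)) : c = 0 := by
  by_contra hc
  exact hfc.not_tendsto (Metric.disjoint_nhds_cobounded d)
    ((tendsto_mul_right_cobounded hc).comp hf)

lemma diagonal_mul_mul_inv_diagonal_apply {ι K : Type*} [Fintype ι] [DecidableEq ι] [Field K]
    {d : ι → K} (hd : ∀ i, d i ≠ 0) (g : Matrix ι ι K) (i j : ι) :
    (diagonal d * g * (diagonal d)⁻¹) i j = d i * g i j / d j := by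
  have inv_diagonal_d : (diagonal d)⁻¹ = diagonal fun k ↦ (d k)⁻¹ :=
    inv_eq_right_inv (by simp [hd])
  rw [inv_diagonal_d, mul_diagonal, diagonal_mul, div_eq_mul_inv]

/-- The conjugate `D_a(z) g D_a(z)⁻¹` of `g` by the one-parameter subgroup
`D_a(z) = diag(z ^ a i)`, as a function of `z` on the whole field; it is meaningful for `z ≠ 0`
only. -/
noncomputable def conjDiagonalZPow {ι K : Type*} [Fintype ι] [DecidableEq ι] [Field K] (a : ι → ℤ)
    (g : Matrix ι ι K) (z : K) : Matrix ι ι K :=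
  diagonal (fun i ↦ z ^ a i) * g * (diagonal fun i ↦ z ^ a i)⁻¹

lemma conjDiagonalZPow_apply {ι K : Type*} [Fintype ι] [DecidableEq ι] [Field K] (a : ι → ℤ)
    (g : Matrix ι ι K) {z : K} (hz : z ≠ 0) (i j : ι) :
    conjDiagonalZPow a g z i j = z ^ (a i - a j) * g i j := by
  rw [conjDiagonalZPow, diagonal_mul_mul_inv_diagonal_apply fun k ↦ zpow_ne_zero (a k) hz,
    zpow_sub₀ hz, mul_div_right_comm]

lemma apply_eq_zero_of_tendsto_conjDiagonalZPow {ι 𝕜 : Type*} [Fintype ι] [DecidableEq ι]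
    [NormedField 𝕜] {a : ι → ℤ} {g A : Matrix ι ι 𝕜} {l : Filter 𝕜} [l.NeBot]
    (hl : ∀ᶠ z in l, z ≠ 0) (hA : Tendsto (conjDiagonalZPow a g) l (𝓝 A)) {i j : ι}
    (hij : Tendsto (fun z : 𝕜 ↦ z ^ (a i - a j)) l (cobounded 𝕜)) : g i j = 0 := by
  have tendsto_entry : Tendsto (fun z ↦ conjDiagonalZPow a g z i j) l (𝓝 (A i j)) :=
    (hA.apply_nhds i).apply_nhds j
  exact eq_zero_of_tendsto_mul_const_of_tendsto_cobounded hij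
    (tendsto_entry.congr' (hl.mono fun z hz ↦ conjDiagonalZPow_apply a g hz i j))

variable {ι 𝕜 : Type*} [Fintype ι] [DecidableEq ι] [NontriviallyNormedField 𝕜] {a : ι → ℤ}
  {g A B : Matrix ι ι 𝕜}

lemma apply_eq_zero_of_tendsto_conjDiagonalZPow_nhdsNE_zero
    (hA : Tendsto (conjDiagonalZPow a g) (𝓝[≠] 0) (𝓝 A)) {i j : ι} (hij : a i < a j) :
    g i j = 0 :=
  apply_eq_zero_of_tendsto_conjDiagonalZPow (l := 𝓝[≠] 0) self_mem_nhdsWithin hA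
    (tendsto_zpow_nhdsNE_zero_cobounded (sub_neg.2 hij))

lemma apply_eq_zero_of_tendsto_conjDiagonalZPow_cobounded
    (hB : Tendsto (conjDiagonalZPow a g) (cobounded 𝕜) (𝓝 B)) {i j : ι} (hij : a j < a i) :
    g i j = 0 :=
  apply_eq_zero_of_tendsto_conjDiagonalZPow (eventually_ne_cobounded 0) hB
    (tendsto_zpow_cobounded_cobounded (sub_pos.2 hij))

lemma conjDiagonalZPow_eq_self_of_tendsto
    (hA : Tendsto (conjDiagonalZPow a g) (𝓝[≠] 0) (𝓝 A))
    (hB : Tendsto (conjDiagonalZPow a g) (cobounded 𝕜) (𝓝 B)) {z : 𝕜} (hz : z ≠ 0) :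
    conjDiagonalZPow a g z = g := by
  ext i j
  rw [conjDiagonalZPow_apply a g hz]
  rcases lt_trichotomy (a i) (a j) with hlt | heq | hgt
  · rw [apply_eq_zero_of_tendsto_conjDiagonalZPow_nhdsNE_zero hA hlt, mul_zero]
  · rw [heq, sub_self, zpow_zero, one_mul]
  · rw [apply_eq_zero_of_tendsto_conjDiagonalZPow_cobounded hB hgt, mul_zero]

theorem eq_one_of_tendsto_conj_diagonal_zero_and_infty_general
    (hA : Tendsto (conjDiagonalZPow a g) (𝓝[≠] 0) (𝓝 A))
    (hB : Tendsto (conjDiagonalZPow a g) (cobounded 𝕜) (𝓝 B)) : g = A ∧ g = B := by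
  have conj_eq {z : 𝕜} (hz : z ≠ 0) : g = conjDiagonalZPow a g z :=
    (conjDiagonalZPow_eq_self_of_tendsto hA hB hz).symm
  have tendsto_zero : Tendsto (conjDiagonalZPow a g) (𝓝[≠] 0) (𝓝 g) :=
    tendsto_const_nhds.congr' (eventually_mem_nhdsWithin.mono fun _ ↦ conj_eq)
  have tendsto_infty : Tendsto (conjDiagonalZPow a g) (cobounded 𝕜) (𝓝 g) :=
    tendsto_const_nhds.congr' ((eventually_ne_cobounded 0).mono fun _ ↦ conj_eq)
  exact ⟨tendsto_nhds_unique tendsto_zero hA, tendsto_nhds_unique tendsto_infty hB⟩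

end

/-- If `D_a(λ) g D_a(λ)⁻¹` tends to the identity matrix both as `λ → 0` (punctured
neighborhood filter) and as `λ → ∞` (cobounded filter on `ℂ`), then `g = 1`:
the positive and negative subgroups of `GL_n(ℂ)` intersect trivially. -/
theorem eq_one_of_tendsto_conj_diagonal_zero_and_infty (n : ℕ) (a : Fin n → ℤ)
    (g : GL (Fin n) ℂ)
    (h0 : Filter.Tendsto
      (fun lam : ℂ =>
        Matrix.diagonal (fun i => lam ^ (a i)) * (g : Matrix (Fin n) (Fin n) ℂ) *
          (Matrix.diagonal (fun i => lam ^ (a i)))⁻¹)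
      (nhdsWithin (0 : ℂ) {0}ᶜ) (nhds (1 : Matrix (Fin n) (Fin n) ℂ)))
    (hinf : Filter.Tendsto
      (fun lam : ℂ =>
        Matrix.diagonal (fun i => lam ^ (a i)) * (g : Matrix (Fin n) (Fin n) ℂ) *
          (Matrix.diagonal (fun i => lam ^ (a i)))⁻¹)
      (Bornology.cobounded ℂ) (nhds (1 : Matrix (Fin n) (Fin n) ℂ))) :
    g = 1 :=
  Units.ext (eq_one_of_tendsto_conj_diagonal_zero_and_infty_general h0 hinf).1
end

section
/- Let R be a commutative ring, n a natural number, a : Fin n → ℤ, and M an n×n matrix over R such that for all indices i, j with a i ≤ a j, the (i,j) entry of M equals the (i,j) entry of the identity matrix. Then M − 1 is nilpotent; in fact (M − 1)^n = 0. -/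
/-!
Rank each weight by the number of weights strictly below it. Every nonzero entry `(i, j)` of
`N = M - 1` lowers the rank by at least one, so every nonzero entry of `N ^ k` lowers it by at
least `k`. Ranks are smaller than the number `d` of distinct weights, hence `N ^ d = 0`.
-/

section Rank

variable {α : Type*} [Preorder α] {s : Set α}

theorem ncard_inter_Iio_lt_ncard (hs : s.Finite) {x : α} (hx : x ∈ s) :
    (s ∩ Set.Iio x).ncard < s.ncard :=
  Set.ncard_lt_ncard ⟨Set.inter_subset_left, fun h => lt_irrefl x (h hx).2⟩ hs

theorem strictMonoOn_ncard_inter_Iio (hs : s.Finite) :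
    StrictMonoOn (fun x => (s ∩ Set.Iio x).ncard) s := by
  intro x hx y _ hxy
  have hsub : s ∩ Set.Iio x ⊆ s ∩ Set.Iio y :=
    Set.inter_subset_inter_right s (Set.Iio_subset_Iio hxy.le)
  have hnot : ¬ s ∩ Set.Iio y ⊆ s ∩ Set.Iio x := fun h => lt_irrefl x (h ⟨hx, hxy⟩).2
  exact Set.ncard_lt_ncard ⟨hsub, hnot⟩ (hs.inter_of_left _)

end Rank

section Nilpotent

variable {ι R α : Type*} [Fintype ι] [DecidableEq ι] [Preorder α]

theorem matrix_pow_apply_eq_zero_of_lt_add [Semiring R] {N : Matrix ι ι R} {r : ι → ℕ}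
    (hN : ∀ i j, r i ≤ r j → N i j = 0) (k : ℕ) {i j : ι} (hij : r i < r j + k) :
    (N ^ k) i j = 0 := by
  induction k generalizing i with
  | zero =>
    have hne : i ≠ j := by
      rintro rfl
      exact lt_irrefl _ hij
    rw [pow_zero, Matrix.one_apply_ne hne]
  | succ k ih =>
    rw [pow_succ', Matrix.mul_apply]
    refine Finset.sum_eq_zero fun l _ => ?_
    rcases le_or_gt (r i) (r l) with hil | hli
    · rw [hN i l hil, zero_mul]
    · rw [ih (by lia), mul_zero]

theorem matrix_pow_ncard_range_eq_zero [Semiring R] {a : ι → α} {N : Matrix ι ι R}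
    (hN : ∀ i j, ¬ a j < a i → N i j = 0) : N ^ (Set.range a).ncard = 0 := by
  have hfin : (Set.range a).Finite := Set.finite_range a
  let r : ι → ℕ := fun i => (Set.range a ∩ Set.Iio (a i)).ncard
  have hr_mono : ∀ {i j}, a j < a i → r j < r i := fun {i j} hji =>
    strictMonoOn_ncard_inter_Iio hfin ⟨j, rfl⟩ ⟨i, rfl⟩ hji
  have hr_lt : ∀ i, r i < (Set.range a).ncard := fun i => ncard_inter_Iio_lt_ncard hfin ⟨i, rfl⟩
  have hNr : ∀ i j, r i ≤ r j → N i j = 0 := fun i j hij =>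
    hN i j fun hji => (hr_mono hji).not_ge hij
  ext i j
  exact matrix_pow_apply_eq_zero_of_lt_add hNr _ ((hr_lt i).trans_le (Nat.le_add_left _ _))

theorem sub_one_nilpotent_of_weighted_unitriangular_general [Ring R] (a : ι → α)
    (M : Matrix ι ι R) (hM : ∀ i j, ¬ a j < a i → M i j = (1 : Matrix ι ι R) i j) :
    (M - 1) ^ (Set.range a).ncard = 0 :=
  matrix_pow_ncard_range_eq_zero fun i j hij => by rw [Matrix.sub_apply, hM i j hij, sub_self]

end Nilpotent

/-- If a matrix `M` over a commutative ring agrees with the identity matrix in every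
entry `(i,j)` with `a i ≤ a j`, then `M - 1` is nilpotent; in fact `(M - 1)^n = 0`. -/
theorem sub_one_nilpotent_of_weighted_unitriangular {R : Type*} [CommRing R] (n : ℕ)
    (a : Fin n → ℤ) (M : Matrix (Fin n) (Fin n) R)
    (hM : ∀ i j : Fin n, a i ≤ a j → M i j = (1 : Matrix (Fin n) (Fin n) R) i j) :
    IsNilpotent (M - 1) ∧ (M - 1) ^ n = 0 := by
  have hcard : (Set.range a).ncard ≤ n := (Finite.card_range_le a).trans_eq (Nat.card_fin n)
  have hpow : (M - 1) ^ n = 0 := pow_eq_zero_of_le hcard <|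
    sub_one_nilpotent_of_weighted_unitriangular_general a M fun i j hij => hM i j (not_lt.mp hij)
  exact ⟨⟨n, hpow⟩, hpow⟩
end

section
/- Let G be a subgroup of GL_n(ℂ), a : Fin n → ℤ, and for nonzero λ ∈ ℂ let D_a(λ) denote the diagonal matrix with diagonal entries λ^{a i}; assume D_a(λ) ∈ G for all nonzero λ. Define G⁺ = {g ∈ G | the matrix-valued function λ ↦ D_a(λ) · g · D_a(λ)⁻¹ tends to the identity along the punctured neighborhood filter 𝓝[≠] 0 on ℂ}. Then G⁺ is a subgroup of G, and every g ∈ G⁺ is unipotent, i.e. (g − 1)^n = 0 as an n×n matrix. -/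
open Filter Matrix

/-!
Along the conjugates `D g D⁻¹` the characteristic polynomial is constant, and its coefficients are
continuous functions of the matrix. So if the conjugates tend to `1`, then `g` has the
characteristic polynomial `(X - 1) ^ n` of the identity, and Cayley–Hamilton gives
`(g - 1) ^ n = 0`. The same principle gives `det g = 1`, so that inverting the conjugates amounts
to taking their adjugates; as this is a continuous operation, the matrices contracted to `1` are
closed under inversion.
-/

section

variable {R m α : Type*} [CommRing R] [TopologicalSpace R] [Fintype m] [DecidableEq m]
  {l : Filter α} {D : α → Matrix m m R}

lemma eq_of_tendsto_conj [l.NeBot] {X : Type*} [TopologicalSpace X] [T2Space X]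
    {f : Matrix m m R → X} (hf : Continuous f)
    (hf_conj : ∀ U, IsUnit U → ∀ A, f (U * A * U⁻¹) = f A)
    (hD : ∀ᶠ t in l, IsUnit (D t)) {M N : Matrix m m R}
    (hM : Tendsto (fun t => D t * M * (D t)⁻¹) l (nhds N)) : f M = f N := by
  have f_conj_eq : ∀ᶠ t in l, f (D t * M * (D t)⁻¹) = f M := by
    filter_upwards [hD] with t ht
    exact hf_conj (D t) ht M
  exact tendsto_nhds_unique (tendsto_const_nhds.congr' (f_conj_eq.mono fun _ h => h.symm))
    ((hf.tendsto N).comp hM)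

lemma tendsto_conj_one (hD : ∀ᶠ t in l, IsUnit (D t)) :
    Tendsto (fun t => D t * 1 * (D t)⁻¹) l (nhds 1) := by
  refine tendsto_const_nhds.congr' ?_
  filter_upwards [hD] with t ht
  rw [mul_one, mul_nonsing_inv _ ((isUnit_iff_isUnit_det _).1 ht)]

variable [IsTopologicalRing R]

lemma continuous_charpoly_coeff (k : ℕ) :
    Continuous fun M : Matrix m m R => M.charpoly.coeff k := by
  have coeff_eq_eval (M : Matrix m m R) :
      M.charpoly.coeff k =
        MvPolynomial.eval (fun ij : m × m => M ij.1 ij.2) ((charpoly.univ R m).coeff k) :=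
    (charpoly.univ_coeff_eval₂Hom m (RingHom.id R) (fun ij : m × m => M ij.1 ij.2) k).symm
  simp only [coeff_eq_eval]
  exact (MvPolynomial.continuous_eval _).comp (by fun_prop)

lemma charpoly_eq_of_tendsto_conj [l.NeBot] [T2Space R] (hD : ∀ᶠ t in l, IsUnit (D t))
    {M N : Matrix m m R} (hM : Tendsto (fun t => D t * M * (D t)⁻¹) l (nhds N)) :
    M.charpoly = N.charpoly := by
  ext k
  refine eq_of_tendsto_conj (continuous_charpoly_coeff k) ?_ hD hM
  rintro _ ⟨u, rfl⟩ A
  rw [charpoly_units_conj]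

lemma sub_one_pow_card_eq_zero_of_tendsto_conj_one [l.NeBot] [T2Space R]
    (hD : ∀ᶠ t in l, IsUnit (D t)) {M : Matrix m m R}
    (hM : Tendsto (fun t => D t * M * (D t)⁻¹) l (nhds 1)) :
    (M - 1) ^ Fintype.card m = 0 := by
  have charpoly_eq : M.charpoly = (Polynomial.X - 1) ^ Fintype.card m := by
    rw [charpoly_eq_of_tendsto_conj hD hM, charpoly_one]
  simpa [charpoly_eq] using aeval_self_charpoly M

lemma tendsto_conj_mul (hD : ∀ᶠ t in l, IsUnit (D t)) {M M' N N' : Matrix m m R}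
    (hM : Tendsto (fun t => D t * M * (D t)⁻¹) l (nhds N))
    (hM' : Tendsto (fun t => D t * M' * (D t)⁻¹) l (nhds N')) :
    Tendsto (fun t => D t * (M * M') * (D t)⁻¹) l (nhds (N * N')) := by
  refine (hM.mul hM').congr' ?_
  filter_upwards [hD] with t ht
  simp only [mul_assoc, nonsing_inv_mul_cancel_left _ _ ((isUnit_iff_isUnit_det _).1 ht)]

lemma tendsto_conj_inv_one [l.NeBot] [T2Space R] (hD : ∀ᶠ t in l, IsUnit (D t))
    {M : Matrix m m R} (hM : Tendsto (fun t => D t * M * (D t)⁻¹) l (nhds 1)) :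
    Tendsto (fun t => D t * M⁻¹ * (D t)⁻¹) l (nhds 1) := by
  have det_eq_one : M.det = 1 := by
    rw [← det_one (n := m)]
    exact eq_of_tendsto_conj continuous_id.matrix_det (fun _ => det_conj) hD hM
  have adjugate_tendsto : Tendsto (fun t => (D t * M * (D t)⁻¹).adjugate) l (nhds 1) := by
    rw [← adjugate_one]
    exact (continuous_id.matrix_adjugate.tendsto 1).comp hM
  refine adjugate_tendsto.congr' ?_
  filter_upwards [hD] with t ht
  calc (D t * M * (D t)⁻¹).adjugate
      = (D t * M * (D t)⁻¹)⁻¹ := by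
        rw [inv_def (_ * _), det_conj ht, det_eq_one, Ring.inverse_one, one_smul]
    _ = D t * M⁻¹ * (D t)⁻¹ := by
        rw [Matrix.mul_inv_rev, Matrix.mul_inv_rev,
          nonsing_inv_nonsing_inv _ ((isUnit_iff_isUnit_det _).1 ht), mul_assoc]

/-- The invertible matrices contracted to `1` under conjugation by `D t` along `l`. For
`D = D_a` and `l = 𝓝[≠] 0` this is `GL_n⁺`, and `G⁺ = G ⊓ GL_n⁺`. The family `D` is matrix-valued
and only eventually invertible because `D_a(λ)` is not invertible at `λ = 0` in general. -/
def contractedSubgroup [l.NeBot] [T2Space R] (hD : ∀ᶠ t in l, IsUnit (D t)) :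
    Subgroup (GL m R) where
  carrier := {g | Tendsto (fun t => D t * (g : Matrix m m R) * (D t)⁻¹) l (nhds 1)}
  one_mem' := tendsto_conj_one hD
  mul_mem' hg hh := by simpa using tendsto_conj_mul hD hg hh
  inv_mem' hg := by simpa using tendsto_conj_inv_one hD hg

theorem positive_part_subgroup_and_unipotent_general [l.NeBot] [T2Space R]
    (hD : ∀ᶠ t in l, IsUnit (D t)) (G : Subgroup (GL m R)) :
    ∃ P : Subgroup (GL m R),
      (P : Set (GL m R)) = {g | g ∈ G ∧
        Tendsto (fun t => D t * (g : Matrix m m R) * (D t)⁻¹) l (nhds 1)} ∧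
      ∀ g ∈ P, ((g : Matrix m m R) - 1) ^ Fintype.card m = 0 :=
  ⟨G ⊓ contractedSubgroup hD, rfl,
    fun _ hg => sub_one_pow_card_eq_zero_of_tendsto_conj_one hD hg.2⟩

end

lemma eventually_isUnit_diagonal_zpow {K m : Type*} [Field K] [TopologicalSpace K] [Fintype m]
    [DecidableEq m] (a : m → ℤ) :
    ∀ᶠ c : K in nhdsWithin 0 {0}ᶜ, IsUnit (diagonal fun i => c ^ a i) := by
  filter_upwards [self_mem_nhdsWithin] with c hc
  rw [isUnit_diagonal, Pi.isUnit_iff]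
  exact fun i => (zpow_ne_zero _ hc).isUnit

/-- Let `G` be a subgroup of `GL_n(ℂ)` containing the diagonal one-parameter subgroup
`λ ↦ diag(λ^(a i))` (for `λ ≠ 0`). The positive part
`G⁺ = {g ∈ G | D_a(λ) g D_a(λ)⁻¹ → 1 as λ → 0}` is a subgroup of `G` (it contains `1`
and is closed under multiplication and inversion), and every `g ∈ G⁺` is unipotent:
`(g - 1)^n = 0` as a matrix. -/
theorem positive_part_subgroup_and_unipotent (n : ℕ) (a : Fin n → ℤ)
    (G : Subgroup (GL (Fin n) ℂ))
    (hdiag : ∀ lam : ℂ, lam ≠ 0 → ∃ u : GL (Fin n) ℂ, u ∈ G ∧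
      (u : Matrix (Fin n) (Fin n) ℂ) = Matrix.diagonal (fun i => lam ^ (a i))) :
    (1 : GL (Fin n) ℂ) ∈
      {g : GL (Fin n) ℂ | g ∈ G ∧ Filter.Tendsto
        (fun lam : ℂ =>
          Matrix.diagonal (fun i => lam ^ (a i)) * (g : Matrix (Fin n) (Fin n) ℂ) *
            (Matrix.diagonal (fun i => lam ^ (a i)))⁻¹)
        (nhdsWithin (0 : ℂ) {0}ᶜ) (nhds (1 : Matrix (Fin n) (Fin n) ℂ))} ∧
    (∀ g h : GL (Fin n) ℂ,
      g ∈ {g : GL (Fin n) ℂ | g ∈ G ∧ Filter.Tendsto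
        (fun lam : ℂ =>
          Matrix.diagonal (fun i => lam ^ (a i)) * (g : Matrix (Fin n) (Fin n) ℂ) *
            (Matrix.diagonal (fun i => lam ^ (a i)))⁻¹)
        (nhdsWithin (0 : ℂ) {0}ᶜ) (nhds (1 : Matrix (Fin n) (Fin n) ℂ))} →
      h ∈ {g : GL (Fin n) ℂ | g ∈ G ∧ Filter.Tendsto
        (fun lam : ℂ =>
          Matrix.diagonal (fun i => lam ^ (a i)) * (g : Matrix (Fin n) (Fin n) ℂ) *
            (Matrix.diagonal (fun i => lam ^ (a i)))⁻¹)
        (nhdsWithin (0 : ℂ) {0}ᶜ) (nhds (1 : Matrix (Fin n) (Fin n) ℂ))} →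
      g * h ∈ {g : GL (Fin n) ℂ | g ∈ G ∧ Filter.Tendsto
        (fun lam : ℂ =>
          Matrix.diagonal (fun i => lam ^ (a i)) * (g : Matrix (Fin n) (Fin n) ℂ) *
            (Matrix.diagonal (fun i => lam ^ (a i)))⁻¹)
        (nhdsWithin (0 : ℂ) {0}ᶜ) (nhds (1 : Matrix (Fin n) (Fin n) ℂ))}) ∧
    (∀ g : GL (Fin n) ℂ,
      g ∈ {g : GL (Fin n) ℂ | g ∈ G ∧ Filter.Tendsto
        (fun lam : ℂ =>
          Matrix.diagonal (fun i => lam ^ (a i)) * (g : Matrix (Fin n) (Fin n) ℂ) *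
            (Matrix.diagonal (fun i => lam ^ (a i)))⁻¹)
        (nhdsWithin (0 : ℂ) {0}ᶜ) (nhds (1 : Matrix (Fin n) (Fin n) ℂ))} →
      g⁻¹ ∈ {g : GL (Fin n) ℂ | g ∈ G ∧ Filter.Tendsto
        (fun lam : ℂ =>
          Matrix.diagonal (fun i => lam ^ (a i)) * (g : Matrix (Fin n) (Fin n) ℂ) *
            (Matrix.diagonal (fun i => lam ^ (a i)))⁻¹)
        (nhdsWithin (0 : ℂ) {0}ᶜ) (nhds (1 : Matrix (Fin n) (Fin n) ℂ))}) ∧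
    (∀ g : GL (Fin n) ℂ,
      g ∈ {g : GL (Fin n) ℂ | g ∈ G ∧ Filter.Tendsto
        (fun lam : ℂ =>
          Matrix.diagonal (fun i => lam ^ (a i)) * (g : Matrix (Fin n) (Fin n) ℂ) *
            (Matrix.diagonal (fun i => lam ^ (a i)))⁻¹)
        (nhdsWithin (0 : ℂ) {0}ᶜ) (nhds (1 : Matrix (Fin n) (Fin n) ℂ))} →
      ((g : Matrix (Fin n) (Fin n) ℂ) - 1) ^ n = 0) := by
  obtain ⟨P, hP, hP_unipotent⟩ :=
    positive_part_subgroup_and_unipotent_general (eventually_isUnit_diagonal_zpow (K := ℂ) a) G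
  rw [← hP]
  exact ⟨P.one_mem, fun _ _ => P.mul_mem, fun _ => P.inv_mem, by simpa using hP_unipotent⟩
end

section
/- Let K be a field, n a natural number, and a : Fin n → ℤ. Let U_a be the set of n×n matrices M over K such that for all indices i, j with a i ≤ a j, the (i,j) entry of M equals the (i,j) entry of the identity matrix. Then U_a contains the identity matrix, is closed under matrix multiplication, and every M ∈ U_a is invertible with M⁻¹ ∈ U_a; consequently U_a is (the underlying set of) a subgroup of GL_n(K). -/
/-!
Strictly block triangular matrices form a left ideal in the ring of block triangular ones, and a
matrix is block unitriangular when it differs from `1` by an element of this ideal. The identity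
`M * N - 1 = M * (N - 1) + (M - 1)` then gives closure under products, and
`M⁻¹ - 1 = -(M⁻¹ * (M - 1))` gives closure under inverses: the inverse exists because all diagonal
blocks are identities, so `det M = 1`, and the inverse of a block triangular matrix is block
triangular.
-/

section

open Matrix

variable {m α R : Type*} {b : m → α}

/-- Block triangular matrices whose diagonal blocks vanish, with the convention of
`Matrix.BlockTriangular`: the entry `(i, j)` lies weakly below the diagonal when `b j ≤ b i`. -/
def StrictBlockTriangular [LE α] [Zero R] (M : Matrix m m R) (b : m → α) : Prop :=
  ∀ ⦃i j⦄, b j ≤ b i → M i j = 0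

/-- Block triangular matrices whose diagonal blocks are identity matrices. The matrices agreeing
with `1` at all `(i, j)` with `a i ≤ a j` are those block unitriangular for
`OrderDual.toDual ∘ a`. -/
def BlockUnitriangular [LE α] [DecidableEq m] [Zero R] [One R] (M : Matrix m m R) (b : m → α) :
    Prop :=
  ∀ ⦃i j⦄, b j ≤ b i → M i j = (1 : Matrix m m R) i j

namespace StrictBlockTriangular

theorem add [LE α] [AddZeroClass R] {M N : Matrix m m R} (hM : StrictBlockTriangular M b)
    (hN : StrictBlockTriangular N b) : StrictBlockTriangular (M + N) b :=
  fun i j hij => by rw [Matrix.add_apply, hM hij, hN hij, add_zero]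

theorem neg [LE α] [NegZeroClass R] {M : Matrix m m R} (hM : StrictBlockTriangular M b) :
    StrictBlockTriangular (-M) b :=
  fun i j hij => by rw [Matrix.neg_apply, hM hij, neg_zero]

theorem blockTriangular_mul [LinearOrder α] [Fintype m] [NonUnitalNonAssocSemiring R]
    {M N : Matrix m m R} (hM : M.BlockTriangular b) (hN : StrictBlockTriangular N b) :
    StrictBlockTriangular (M * N) b := by
  intro i j hji
  rw [mul_apply]
  refine Finset.sum_eq_zero fun k _ => ?_
  rcases lt_or_ge (b k) (b i) with hki | hik
  · rw [hM hki, zero_mul]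
  · rw [hN (hji.trans hik), mul_zero]

end StrictBlockTriangular

theorem blockUnitriangular_iff_strictBlockTriangular_sub_one [LE α] [DecidableEq m]
    [AddGroupWithOne R] {M : Matrix m m R} :
    BlockUnitriangular M b ↔ StrictBlockTriangular (M - 1) b := by
  simp only [BlockUnitriangular, StrictBlockTriangular, Matrix.sub_apply, sub_eq_zero]

namespace BlockUnitriangular

variable [DecidableEq m]

theorem one [LE α] [Zero R] [One R] : BlockUnitriangular (1 : Matrix m m R) b :=
  fun _ _ _ => rfl

theorem blockTriangular [Preorder α] [Zero R] [One R] {M : Matrix m m R}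
    (hM : BlockUnitriangular M b) : M.BlockTriangular b :=
  fun _ _ hij => (hM hij.le).trans (blockTriangular_one hij)

theorem toSquareBlock_eq_one [Preorder α] [Zero R] [One R] {M : Matrix m m R}
    (hM : BlockUnitriangular M b) (k : α) : M.toSquareBlock b k = 1 := by
  ext ⟨i, hi⟩ ⟨j, hj⟩
  have hji : b j ≤ b i := (hj.trans hi.symm).le
  simp only [toSquareBlock_def, of_apply, hM hji, one_apply, Subtype.mk.injEq]

variable [Fintype m] [LinearOrder α]

theorem mul [Ring R] {M N : Matrix m m R} (hM : BlockUnitriangular M b)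
    (hN : BlockUnitriangular N b) : BlockUnitriangular (M * N) b := by
  have hMT : M.BlockTriangular b := hM.blockTriangular
  rw [blockUnitriangular_iff_strictBlockTriangular_sub_one] at hM hN ⊢
  have hsub : M * N - 1 = M * (N - 1) + (M - 1) := by noncomm_ring
  rw [hsub]
  exact (hN.blockTriangular_mul hMT).add hM

variable [CommRing R] {M : Matrix m m R}

theorem det_eq_one (hM : BlockUnitriangular M b) : M.det = 1 := by
  rw [hM.blockTriangular.det]
  exact Finset.prod_eq_one fun k _ => by rw [hM.toSquareBlock_eq_one, det_one]

theorem isUnit_det (hM : BlockUnitriangular M b) : IsUnit M.det :=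
  hM.det_eq_one ▸ isUnit_one

theorem inv (hM : BlockUnitriangular M b) : BlockUnitriangular M⁻¹ b := by
  have := M.invertibleOfIsUnitDet hM.isUnit_det
  have hinvT : M⁻¹.BlockTriangular b := blockTriangular_inv_of_blockTriangular hM.blockTriangular
  have hsub : M⁻¹ - 1 = -(M⁻¹ * (M - 1)) := by
    rw [mul_sub, nonsing_inv_mul M hM.isUnit_det, mul_one, neg_sub]
  rw [blockUnitriangular_iff_strictBlockTriangular_sub_one] at hM ⊢
  rw [hsub]
  exact (hM.blockTriangular_mul hinvT).neg

end BlockUnitriangular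

end

theorem weighted_unitriangular_is_subgroup_general {R m α : Type*} [CommRing R] [Fintype m]
    [DecidableEq m] [LinearOrder α] (b : m → α) :
    BlockUnitriangular (1 : Matrix m m R) b ∧
    (∀ M N : Matrix m m R, BlockUnitriangular M b → BlockUnitriangular N b →
      BlockUnitriangular (M * N) b) ∧
    (∀ M : Matrix m m R, BlockUnitriangular M b → IsUnit M ∧ BlockUnitriangular M⁻¹ b) :=
  ⟨.one, fun _ _ => .mul, fun M hM => ⟨M.isUnit_iff_isUnit_det.mpr hM.isUnit_det, hM.inv⟩⟩

/-- Over a field `K`, the set `U_a` of matrices agreeing with the identity in every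
entry `(i,j)` with `a i ≤ a j` contains the identity, is closed under multiplication,
and each of its elements is invertible with inverse again in `U_a`; hence `U_a` is
(the underlying set of) a subgroup of `GL_n(K)`. -/
theorem weighted_unitriangular_is_subgroup {K : Type*} [Field K] (n : ℕ)
    (a : Fin n → ℤ) :
    (1 : Matrix (Fin n) (Fin n) K) ∈
      {M : Matrix (Fin n) (Fin n) K |
        ∀ i j : Fin n, a i ≤ a j → M i j = (1 : Matrix (Fin n) (Fin n) K) i j} ∧
    (∀ M N : Matrix (Fin n) (Fin n) K,
      M ∈ {M : Matrix (Fin n) (Fin n) K |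
        ∀ i j : Fin n, a i ≤ a j → M i j = (1 : Matrix (Fin n) (Fin n) K) i j} →
      N ∈ {M : Matrix (Fin n) (Fin n) K |
        ∀ i j : Fin n, a i ≤ a j → M i j = (1 : Matrix (Fin n) (Fin n) K) i j} →
      M * N ∈ {M : Matrix (Fin n) (Fin n) K |
        ∀ i j : Fin n, a i ≤ a j → M i j = (1 : Matrix (Fin n) (Fin n) K) i j}) ∧
    (∀ M : Matrix (Fin n) (Fin n) K,
      M ∈ {M : Matrix (Fin n) (Fin n) K |
        ∀ i j : Fin n, a i ≤ a j → M i j = (1 : Matrix (Fin n) (Fin n) K) i j} →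
      IsUnit M ∧ M⁻¹ ∈ {M : Matrix (Fin n) (Fin n) K |
        ∀ i j : Fin n, a i ≤ a j → M i j = (1 : Matrix (Fin n) (Fin n) K) i j}) := by
  exact weighted_unitriangular_is_subgroup_general (OrderDual.toDual ∘ a)
end
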